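/- Let A be a complex algebra equipped with a linear functional φ : A → ℂ, and let A₁, A₂ ⊆ A be two subalgebras such that A₁ is monotone independent from A₂ with respect to φ. Then T₀(A₁) and T₀(A₂) are cyclically monotone independent subalgebras of the augmentation ideal of T(A) with respect to (φ, [φ]). -/

import Mathlib

open scoped BigOperators

namespace NCProb

variable {A : Type*} [Ring A] [Algebra ℂ A]

/-- Ordered sublist of the tuple `a` on the indices satisfying `P`. -/
noncomputable def ordList {n : ℕ} (a : Fin n → A) (P : Fin n → Prop) [DecidablePred P] :
    List A :=
  ((List.finRange n).filter fun i => decide (P i)).map a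

/-- `(a, j)` is an alternating sequence for the pair of sets `(S₁, S₂)`:
`a i ∈ S₁` when `j i = false`, `a i ∈ S₂` when `j i = true`, and consecutive labels differ. -/
def Alternates {n : ℕ} (S₁ S₂ : Set A) (a : Fin n → A) (j : Fin n → Bool) : Prop :=
  (∀ i, a i ∈ (if j i then S₂ else S₁)) ∧
    ∀ (i : ℕ) (h : i + 1 < n), j ⟨i, Nat.lt_of_succ_lt h⟩ ≠ j ⟨i + 1, h⟩

def IsTracial (ω : A →ₗ[ℂ] ℂ) : Prop := ∀ a b : A, ω (a * b) = ω (b * a)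

/-- Freeness of a pair of subalgebras (given as sets) with respect to `Ψ`. -/
def IsFree (Ψ : A →ₗ[ℂ] ℂ) (S₁ S₂ : Set A) : Prop :=
  ∀ (n : ℕ) (a : Fin n → A) (j : Fin n → Bool),
    Alternates S₁ S₂ a j → (∀ i, Ψ (a i) = 0) → Ψ (List.ofFn a).prod = 0

/-- Conditional freeness with respect to the pair `(Ψ, φ)`. -/
def IsCondFree (Ψ φ : A →ₗ[ℂ] ℂ) (S₁ S₂ : Set A) : Prop :=
  ∀ (n : ℕ) (a : Fin n → A) (j : Fin n → Bool),
    Alternates S₁ S₂ a j → (∀ i, Ψ (a i) = 0) →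
      Ψ (List.ofFn a).prod = 0 ∧ φ (List.ofFn a).prod = ∏ i, φ (a i)

/-- Cyclic freeness with respect to the pair `(Ψ, ω)`. -/
def IsCyclicallyFree (Ψ ω : A →ₗ[ℂ] ℂ) (S₁ S₂ : Set A) : Prop :=
  IsFree Ψ S₁ S₂ ∧
    ∀ (n : ℕ) (a : Fin n → A) (j : Fin n → Bool) (hn : 2 ≤ n),
      Alternates S₁ S₂ a j →
      j ⟨0, by omega⟩ ≠ j ⟨n - 1, by omega⟩ →
      (∀ i, Ψ (a i) = 0) → ω (List.ofFn a).prod = 0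

/-- Infinitesimal freeness with respect to the pair `(Ψ, ω)`. -/
def IsInfFree (Ψ ω : A →ₗ[ℂ] ℂ) (S₁ S₂ : Set A) : Prop :=
  ∀ (n : ℕ) (a : Fin n → A) (j : Fin n → Bool),
    Alternates S₁ S₂ a j → (∀ i, Ψ (a i) = 0) →
      Ψ (List.ofFn a).prod = 0 ∧
      ω (List.ofFn a).prod = ∑ i : Fin n, ω (a i) * Ψ (ordList a fun k => k ≠ i).prod

/-- Cyclic-conditional freeness with respect to the triple `(Ψ, φ, ω)`. -/
def IsCycCondFree (Ψ φ ω : A →ₗ[ℂ] ℂ) (S₁ S₂ : Set A) : Prop :=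
  IsCondFree Ψ φ S₁ S₂ ∧
    ∀ (n : ℕ) (a : Fin n → A) (j : Fin n → Bool) (hn : 2 ≤ n),
      Alternates S₁ S₂ a j →
      j ⟨0, by omega⟩ ≠ j ⟨n - 1, by omega⟩ →
      (∀ i, Ψ (a i) = 0) → ω (List.ofFn a).prod = ∏ i, φ (a i)

/-- Boolean cumulants (with explicit fuel), via the standard recursion
`φ(a₁⋯aₙ) = Σ_{k=1}^{n} β_k(a₁,…,a_k)·φ(a_{k+1}⋯aₙ)`. -/
noncomputable def booleanAux (φ : A →ₗ[ℂ] ℂ) : ℕ → List A → ℂ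
  | 0, _ => 0
  | fuel + 1, l =>
      φ l.prod - ∑ k ∈ Finset.range (l.length - 1),
        booleanAux φ fuel (l.take (k + 1)) * φ (l.drop (k + 1)).prod

/-- The Boolean cumulant `β^φ(a₁,…,aₙ)` of the entries of the list `l = [a₁,…,aₙ]`. -/
noncomputable def booleanCumulant (φ : A →ₗ[ℂ] ℂ) (l : List A) : ℂ :=
  booleanAux φ l.length l

/-- Product of the `Ψ`-moments of the gaps between consecutive elements of `V`. -/
noncomputable def gapFactor {n : ℕ} (Ψ : A →ₗ[ℂ] ℂ) (a : Fin n → A) (V : Finset (Fin n)) : ℂ :=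
  (((V.sort (· ≤ ·)).zip (V.sort (· ≤ ·)).tail).map fun p =>
      Ψ (ordList a fun i => p.1 < i ∧ i < p.2).prod).prod

noncomputable def headProd {n : ℕ} (a : Fin n → A) (V : Finset (Fin n)) : A :=
  (ordList a fun i => ∀ v ∈ V, i < v).prod

noncomputable def tailProd {n : ℕ} (a : Fin n → A) (V : Finset (Fin n)) : A :=
  (ordList a fun i => ∀ v ∈ V, v < i).prod

/-- Cumulants with respect to `(Ψ, θ)` with explicit fuel, defined through the
moment-cumulant recursion obtained by singling out the distinguished block `V`:
mode 0: free cumulants (`θ = Ψ`, the block `V` contains the first letter);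
mode 1: infinitesimal free cumulants (wrap gap read in linear order `head·tail`);
mode 2: cyclic free cumulants (wrap gap read in cyclic order `tail·head`). -/
noncomputable def cumulAux (Ψ θ : A →ₗ[ℂ] ℂ) (mode : ℕ) : ℕ → List A → ℂ
  | 0, _ => 0
  | fuel + 1, l =>
      θ l.prod - ∑ V : Finset (Fin l.length),
        if V.Nonempty ∧ V ≠ Finset.univ ∧ (mode ≠ 0 ∨ ∃ v ∈ V, (v : ℕ) = 0) then
          cumulAux Ψ θ mode fuel ((V.sort (· ≤ ·)).map l.get) *
            Ψ (if mode = 2 then tailProd l.get V * headProd l.get V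
               else headProd l.get V * tailProd l.get V) *
            gapFactor Ψ l.get V
        else 0

/-- The free cumulant `κ^Ψ_n(a₁,…,aₙ)`. -/
noncomputable def freeCumulant (Ψ : A →ₗ[ℂ] ℂ) (l : List A) : ℂ :=
  cumulAux Ψ Ψ 0 l.length l

/-- The infinitesimal free cumulant `∂κ^Ψ_n(a₁,…,aₙ)` of the pair `(Ψ, dΨ)`. -/
noncomputable def infCumulant (Ψ dΨ : A →ₗ[ℂ] ℂ) (l : List A) : ℂ :=
  cumulAux Ψ dΨ 1 l.length l

/-- The cyclic free cumulant `Dκ^Ψ_n(a₁,…,aₙ)` of the pair `(Ψ, dΨ)`. -/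
noncomputable def cycCumulant (Ψ dΨ : A →ₗ[ℂ] ℂ) (l : List A) : ℂ :=
  cumulAux Ψ dΨ 2 l.length l

/-- Vanishing of mixed cumulants: `f` vanishes on mixed tuples from `S₁ ∪ S₂`. -/
def MixedVanishes (f : List A → ℂ) (S₁ S₂ : Set A) : Prop :=
  ∀ (n : ℕ) (a : Fin n → A), 2 ≤ n → (∀ i, a i ∈ S₁ ∪ S₂) →
    (∃ k, a k ∈ S₁) → (∃ l, a l ∈ S₂) → f (List.ofFn a) = 0

/-- The value `[φ](a₁ ⊗ ⋯ ⊗ aₙ) = Σ_{1≤i₁<…<i_ℓ≤n} ∏_k β^φ`(cyclic pieces)`. -/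
noncomputable def mkValue (φ : A →ₗ[ℂ] ℂ) {n : ℕ} (a : Fin n → A) : ℂ :=
  ∑ V : Finset (Fin n),
    if V.Nonempty then
      (((V.sort (· ≤ ·)).zip (V.sort (· ≤ ·)).tail).map fun p =>
          booleanCumulant φ (ordList a fun i => p.1 ≤ i ∧ i < p.2)).prod *
        booleanCumulant φ
          ((ordList a fun i => ∀ v ∈ V, v ≤ i) ++ ordList a fun i => ∀ v ∈ V, i < v)
    else 0

/-- Non-crossing partitions of `{1,…,n}` encoded as finsets of blocks. -/
def IsNCPartition {n : ℕ} (P : Finset (Finset (Fin n))) : Prop :=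
  (∀ B ∈ P, B.Nonempty) ∧
    (∀ i : Fin n, ∃! B, B ∈ P ∧ i ∈ B) ∧
    ∀ B₁ ∈ P, ∀ B₂ ∈ P, ∀ p ∈ B₁, ∀ r ∈ B₁, ∀ q ∈ B₂, ∀ s ∈ B₂,
      p < q → q < r → r < s → B₁ = B₂

open scoped Classical in
/-- The value `⌞Ψ⌟(a₁⊗⋯⊗aₙ) = Σ_{π ∈ NC(n)} (n+1-|π|)·κ^Ψ_π(a₁,…,aₙ)`. -/
noncomputable def lsoulValue (Ψ : A →ₗ[ℂ] ℂ) {n : ℕ} (a : Fin n → A) : ℂ :=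
  ∑ P : Finset (Finset (Fin n)),
    if IsNCPartition P then
      ((n : ℂ) + 1 - P.card) * ∏ B ∈ P, freeCumulant Ψ ((B.sort (· ≤ ·)).map a)
    else 0

/-- `F` extends the linear functional `f` from `A` to the tensor algebra `T(A)`:
`F(a₁ ⊗ ⋯ ⊗ aₙ) = f(a₁⋯aₙ)`. -/
def ExtendsTo (f : A →ₗ[ℂ] ℂ) (F : TensorAlgebra ℂ A →ₗ[ℂ] ℂ) : Prop :=
  ∀ l : List A, l ≠ [] → F (l.map fun x => TensorAlgebra.ι ℂ x).prod = f l.prod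


/-- `S₁` is monotone independent from `S₂` with respect to `φ`: in any alternating
sequence, an element of `S₂` (which is automatically a peak) can be pulled out. -/
def IsMonotoneIndep {A : Type*} [Ring A] [Algebra ℂ A]
    (φ : A →ₗ[ℂ] ℂ) (S₁ S₂ : Set A) : Prop :=
  ∀ (n : ℕ) (a : Fin n → A) (j : Fin n → Bool),
    Alternates S₁ S₂ a j → ∀ p : Fin n, j p = true →
      φ (List.ofFn a).prod = φ (a p) * φ (ordList a fun i => i ≠ p).prod

/-- Cyclic monotone independence with respect to the pair `(φ, ω)`. -/
def IsCycMonotoneIndep {A : Type*} [Ring A] [Algebra ℂ A]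
    (φ ω : A →ₗ[ℂ] ℂ) (S₁ S₂ : Set A) : Prop :=
  IsMonotoneIndep φ S₁ S₂ ∧
    ∀ (n : ℕ) (av : Fin n → A) (bv : Fin (n + 1) → A), 1 ≤ n →
      (∀ i, av i ∈ S₁) → (∀ i, bv i ∈ S₂) →
      ω (bv 0 * (List.ofFn fun i : Fin n => av i * bv i.succ).prod) =
        ω (List.ofFn av).prod *
          (∏ i : Fin (n + 1), if 0 < (i : ℕ) ∧ (i : ℕ) < n then φ (bv i) else 1) *
          φ (bv (Fin.last n) * bv 0)

/-! ### Sums over the ways of cutting a list in two -/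

section SplitSum

variable {α R : Type*}

/-- The sum of `f u v` over all pairs of lists with `u ++ v = l`. -/
def splitSum [AddCommMonoid R] : (List α → List α → R) → List α → R
  | f, [] => f [] []
  | f, a :: l => f [] (a :: l) + splitSum (fun u v => f (a :: u) v) l

/-- The sum of `f u v` over all pairs of lists with `u ++ v = l` and `u ≠ []`. -/
def splitSumNe [AddCommMonoid R] : (List α → List α → R) → List α → R
  | _, [] => 0
  | f, a :: l => splitSum (fun u v => f (a :: u) v) l

theorem splitSum_eq_add_splitSumNe [AddCommMonoid R] (f : List α → List α → R) (l : List α) :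
    splitSum f l = f [] l + splitSumNe f l := by
  cases l <;> simp [splitSum, splitSumNe]

theorem splitSum_congr [AddCommMonoid R] {f g : List α → List α → R} {l : List α}
    (h : ∀ u v, u ++ v = l → f u v = g u v) : splitSum f l = splitSum g l := by
  induction l generalizing f g with
  | nil => exact h [] [] rfl
  | cons a l ih =>
    simp only [splitSum]
    rw [h [] (a :: l) rfl, ih fun u v huv => h (a :: u) v (by simp [huv])]

theorem splitSumNe_congr [AddCommMonoid R] {f g : List α → List α → R} {l : List α}
    (h : ∀ u v, u ++ v = l → u ≠ [] → f u v = g u v) : splitSumNe f l = splitSumNe g l := by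
  cases l with
  | nil => rfl
  | cons a l => exact splitSum_congr fun u v huv => h (a :: u) v (by simp [huv]) (by simp)

theorem splitSum_append [AddCommMonoid R] (f : List α → List α → R) (x y : List α) :
    splitSum f (x ++ y) =
      splitSum (fun u v => f u (v ++ y)) x + splitSumNe (fun u v => f (x ++ u) v) y := by
  induction x generalizing f with
  | nil => simp [splitSum_eq_add_splitSumNe f y, splitSum]
  | cons a x ih => simp [splitSum, ih, add_assoc]

theorem splitSumNe_append [AddCommMonoid R] (f : List α → List α → R) (x y : List α) :
    splitSumNe f (x ++ y) =
      splitSumNe (fun u v => f u (v ++ y)) x + splitSumNe (fun u v => f (x ++ u) v) y := by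
  cases x with
  | nil => simp [splitSumNe]
  | cons a x => simp [splitSumNe, splitSum_append]

theorem splitSum_add [AddCommMonoid R] (f g : List α → List α → R) (l : List α) :
    splitSum (fun u v => f u v + g u v) l = splitSum f l + splitSum g l := by
  induction l generalizing f g with
  | nil => rfl
  | cons a l ih => simp only [splitSum, ih]; abel

theorem splitSum_zero [AddCommMonoid R] (l : List α) :
    splitSum (fun _ _ => (0 : R)) l = 0 := by
  induction l with
  | nil => rfl
  | cons a l ih => simp only [splitSum, ih, add_zero]

theorem splitSumNe_zero [AddCommMonoid R] (l : List α) :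
    splitSumNe (fun _ _ => (0 : R)) l = 0 := by
  cases l with
  | nil => rfl
  | cons a l => exact splitSum_zero l

theorem splitSum_mul_left [Semiring R] (c : R) (f : List α → List α → R) (l : List α) :
    splitSum (fun u v => c * f u v) l = c * splitSum f l := by
  induction l generalizing f with
  | nil => rfl
  | cons a l ih => simp only [splitSum, ih, mul_add]

theorem splitSumNe_mul_left [Semiring R] (c : R) (f : List α → List α → R) (l : List α) :
    splitSumNe (fun u v => c * f u v) l = c * splitSumNe f l := by
  cases l with
  | nil => simp [splitSumNe]
  | cons a l => exact splitSum_mul_left c _ l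

theorem splitSumNe_sub [AddCommGroup R] (f g : List α → List α → R) (l : List α) :
    splitSumNe (fun u v => f u v - g u v) l = splitSumNe f l - splitSumNe g l := by
  rw [eq_sub_iff_add_eq]
  cases l with
  | nil => simp [splitSumNe]
  | cons a l => simp [splitSumNe, ← splitSum_add]

/-- Only the trivial cut survives if all the others contribute zero. -/
theorem splitSum_eq_last [AddCommMonoid R] {f : List α → List α → R} {l : List α}
    (h : ∀ u v, u ++ v = l → v ≠ [] → f u v = 0) : splitSum f l = f l [] := by
  induction l generalizing f with
  | nil => rfl
  | cons a l ih =>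
    simp only [splitSum]
    rw [h [] (a :: l) rfl (by simp), zero_add,
      ih fun u v huv hv => h (a :: u) v (by simp [huv]) hv]

theorem splitSumNe_eq_last [AddCommMonoid R] {f : List α → List α → R} {l : List α}
    (hl : l ≠ []) (h : ∀ u v, u ++ v = l → u ≠ [] → v ≠ [] → f u v = 0) :
    splitSumNe f l = f l [] := by
  cases l with
  | nil => exact absurd rfl hl
  | cons a l =>
    exact splitSum_eq_last fun u v huv hv => h (a :: u) v (by simp [huv]) (by simp) hv

theorem splitSum_assoc [AddCommMonoid R] (f : List α → List α → List α → R) (l : List α) :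
    splitSum (fun u v => splitSum (fun u₁ u₂ => f u₁ u₂ v) u) l =
      splitSum (fun u v => splitSum (fun v₁ v₂ => f u v₁ v₂) v) l := by
  induction l generalizing f with
  | nil => rfl
  | cons a l ih =>
    simp only [splitSum, splitSum_add, ih, add_assoc]

theorem splitSum_eq_sum_range [AddCommMonoid R] (f : List α → List α → R) (l : List α) :
    splitSum f l = ∑ k ∈ Finset.range (l.length + 1), f (l.take k) (l.drop k) := by
  induction l generalizing f with
  | nil => simp [splitSum]
  | cons a l ih =>
    rw [List.length_cons, Finset.sum_range_succ', add_comm]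
    simp [splitSum, ih]

end SplitSum

/-! ### Moments and Boolean cumulants of words -/

/-- The moment of a word; the empty word has moment one. -/
noncomputable def wordMoment (φ : A →ₗ[ℂ] ℂ) (l : List A) : ℂ :=
  if l = [] then 1 else φ l.prod

@[simp]
theorem wordMoment_nil (φ : A →ₗ[ℂ] ℂ) : wordMoment φ [] = 1 := if_pos rfl

theorem wordMoment_of_ne_nil (φ : A →ₗ[ℂ] ℂ) {l : List A} (h : l ≠ []) :
    wordMoment φ l = φ l.prod := if_neg h

theorem booleanAux_eq_booleanCumulant (φ : A →ₗ[ℂ] ℂ) (m : ℕ) (l : List A)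
    (h : l.length ≤ m) (hl : l ≠ []) : booleanAux φ m l = booleanCumulant φ l := by
  have key : ∀ m m' : ℕ, ∀ l : List A, l ≠ [] → l.length ≤ m → l.length ≤ m' →
      booleanAux φ m l = booleanAux φ m' l := by
    intro m
    induction m with
    | zero => intro m' l hl h; simp_all
    | succ m ih =>
      intro m' l hl h h'
      have hpos := List.length_pos_iff.2 hl
      obtain ⟨k, rfl⟩ : ∃ k, m' = k + 1 := ⟨m' - 1, by omega⟩
      simp only [booleanAux]
      congr 1
      refine Finset.sum_congr rfl fun i hi => ?_
      rw [Finset.mem_range] at hi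
      rw [ih k (l.take (i + 1)) (by simp [hl]) (by simp; omega) (by simp; omega)]
  exact key m _ l hl h le_rfl

theorem wordMoment_eq_splitSumNe (φ : A →ₗ[ℂ] ℂ) {l : List A} (hl : l ≠ []) :
    wordMoment φ l = splitSumNe (fun u v => booleanCumulant φ u * wordMoment φ v) l := by
  obtain ⟨a, t, rfl⟩ := List.exists_cons_of_ne_nil hl
  have h1 : booleanCumulant φ (a :: t) = φ (a :: t).prod - ∑ k ∈ Finset.range t.length,
      booleanCumulant φ (a :: t.take k) * wordMoment φ (t.drop k) := by
    rw [booleanCumulant, List.length_cons, booleanAux]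
    congr 1
    refine Finset.sum_congr rfl fun k hk => ?_
    have hk' : k < t.length := Finset.mem_range.1 hk
    rw [booleanAux_eq_booleanCumulant φ _ _ (by simpa using hk') (by simp), wordMoment_of_ne_nil]
    · simp
    · simpa using hk'
  rw [wordMoment_of_ne_nil φ hl, splitSumNe, splitSum_eq_sum_range, Finset.sum_range_succ]
  simp only [List.take_length, List.drop_length, wordMoment_nil, mul_one, h1]
  ring

theorem wordMoment_cons (φ : A →ₗ[ℂ] ℂ) (a : A) (l : List A) :
    wordMoment φ (a :: l) =
      splitSum (fun u v => booleanCumulant φ (a :: u) * wordMoment φ v) l :=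
  wordMoment_eq_splitSumNe φ (List.cons_ne_nil a l)

/-- The sum over the cuts `l = v ++ t` with `t ≠ []` of the moment of `v` times the Boolean
cumulant of `t ++ c`. -/
noncomputable def tailCumulantSum (φ : A →ₗ[ℂ] ℂ) (c l : List A) : ℂ :=
  splitSum (fun v t => if t = [] then 0 else wordMoment φ v * booleanCumulant φ (t ++ c)) l

@[simp]
theorem tailCumulantSum_nil (φ : A →ₗ[ℂ] ℂ) (c : List A) : tailCumulantSum φ c [] = 0 := by
  simp [tailCumulantSum, splitSum]

theorem tailCumulantSum_cons (φ : A →ₗ[ℂ] ℂ) (c : List A) (a : A) (l : List A) :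
    tailCumulantSum φ c (a :: l) = booleanCumulant φ (a :: l ++ c) +
      splitSum (fun u v => booleanCumulant φ (a :: u) * tailCumulantSum φ c v) l := by
  simp only [tailCumulantSum, splitSum, ← splitSum_mul_left]
  rw [← splitSum_assoc (fun u v t => booleanCumulant φ (a :: u) *
    if t = [] then 0 else wordMoment φ v * booleanCumulant φ (t ++ c))]
  simp only [List.cons_ne_nil, if_false, wordMoment_nil, one_mul, wordMoment_cons]
  congr 1
  refine splitSum_congr fun v t _ => ?_
  by_cases ht : t = []
  · simp [ht, splitSum_zero]
  · simp only [if_neg ht, ← mul_assoc]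
    rw [mul_comm, ← splitSum_mul_left]
    simp only [mul_comm]

theorem tailCumulantSum_nil_left (φ : A →ₗ[ℂ] ℂ) {l : List A} (hl : l ≠ []) :
    tailCumulantSum φ [] l = wordMoment φ l := by
  induction hn : l.length using Nat.strong_induction_on generalizing l with
  | _ n ih =>
    obtain ⟨a, t, rfl⟩ := List.exists_cons_of_ne_nil hl
    rw [tailCumulantSum_cons, wordMoment_cons, List.append_nil,
      ← splitSum_eq_last (f := fun u v => if v = [] then booleanCumulant φ (a :: u) else 0)
        (l := t) (fun u v _ hv => if_neg hv) |>.trans (if_pos rfl), ← splitSum_add]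
    refine splitSum_congr fun u v huv => ?_
    by_cases hv : v = []
    · simp [hv]
    · rw [if_neg hv, zero_add, ih v.length _ hv rfl]
      rw [← hn, ← huv]
      simp only [List.length_cons, List.length_append]
      omega

/-- The value of `[φ]` on a word: the sum over `l = h ++ v ++ t` with `t ≠ []` of the moment of
`v` times the Boolean cumulant of the cyclic piece `t ++ h`. -/
noncomputable def cyclicValue (φ : A →ₗ[ℂ] ℂ) (l : List A) : ℂ :=
  splitSum (fun h s => tailCumulantSum φ h s) l

theorem cyclicValue_cons_eq_append_singleton (φ : A →ₗ[ℂ] ℂ) (a : A) (l : List A) :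
    cyclicValue φ (a :: l) = cyclicValue φ (l ++ [a]) := by
  have h1 : ∀ h s : List A, tailCumulantSum φ h (s ++ [a]) =
      tailCumulantSum φ (a :: h) s + booleanCumulant φ (a :: h) * wordMoment φ s := by
    intro h s
    rw [tailCumulantSum, splitSum_append, splitSumNe, splitSum, if_pos rfl, add_zero,
      tailCumulantSum, mul_comm,
      ← splitSum_eq_last (f := fun v t =>
          if t = [] then wordMoment φ v * booleanCumulant φ (a :: h) else 0)
        (l := s) (fun u v _ hv => if_neg hv) |>.trans (if_pos rfl), ← splitSum_add]
    refine splitSum_congr fun v t _ => ?_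
    by_cases ht : t = [] <;> simp [ht]
  rw [cyclicValue, splitSum, tailCumulantSum_nil_left φ (List.cons_ne_nil a l), cyclicValue,
    splitSum_append, splitSumNe, splitSum, tailCumulantSum_nil, add_zero]
  simp only [h1, splitSum_add, wordMoment_cons]
  ring

theorem cyclicValue_append_comm (φ : A →ₗ[ℂ] ℂ) (x y : List A) :
    cyclicValue φ (x ++ y) = cyclicValue φ (y ++ x) := by
  induction x generalizing y with
  | nil => simp
  | cons a x ih =>
    rw [List.cons_append, cyclicValue_cons_eq_append_singleton, List.append_assoc, ih]
    simp

/-! ### The value of `[φ]` on a word as a sum over cuts -/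

theorem ordList_succ {B : Type*} {n : ℕ} (a : Fin (n + 1) → B) (P : Fin (n + 1) → Prop)
    [DecidablePred P] :
    ordList a P = (if P 0 then [a 0] else []) ++ ordList (Fin.tail a) (fun i => P i.succ) := by
  unfold ordList
  rw [List.finRange_succ, List.filter_cons]
  by_cases h : P 0 <;> simp [h, List.filter_map, Function.comp_def, Fin.tail]

theorem ordList_congr {B : Type*} {n : ℕ} (a : Fin n → B) {P Q : Fin n → Prop}
    [DecidablePred P] [DecidablePred Q] (h : ∀ i, P i ↔ Q i) : ordList a P = ordList a Q := by
  unfold ordList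
  simp only [h]

theorem ordList_of_forall {B : Type*} {n : ℕ} (a : Fin n → B) {P : Fin n → Prop} [DecidablePred P]
    (h : ∀ i, P i) : ordList a P = List.ofFn a := by
  unfold ordList
  simp [h, List.ofFn_eq_map]

theorem sum_finset_fin_succ {M : Type*} [AddCommMonoid M] {n : ℕ}
    (f : Finset (Fin (n + 1)) → M) :
    ∑ V, f V = ∑ V : Finset (Fin n), f (V.map (Fin.succEmb n)) +
      ∑ V : Finset (Fin n), f (insert 0 (V.map (Fin.succEmb n))) := by
  have h0 : (0 : Fin (n + 1)) ∉ (Finset.univ : Finset (Fin n)).map (Fin.succEmb n) := by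
    simp
  have himg : ((Finset.univ : Finset (Fin n)).map (Fin.succEmb n)).powerset =
      (Finset.univ : Finset (Finset (Fin n))).map
        (Finset.mapEmbedding (Fin.succEmb n)).toEmbedding := by
    ext s
    simp only [Finset.mem_powerset, Finset.mem_map, Finset.mem_univ, true_and,
      Finset.subset_map_iff, Finset.subset_univ]
    exact ⟨fun ⟨u, hu⟩ => ⟨u, hu.symm⟩, fun ⟨u, hu⟩ => ⟨u, hu.symm⟩⟩
  have huniv : (Finset.univ : Finset (Fin (n + 1))) =
      insert 0 ((Finset.univ : Finset (Fin n)).map (Fin.succEmb n)) := by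
    ext i
    cases i using Fin.cases <;> simp
  rw [← Finset.powerset_univ, huniv, Finset.sum_powerset_insert h0, himg, Finset.sum_map,
    Finset.sum_map]
  rfl

/-- The product of the Boolean cumulants of the pieces cut out by consecutive elements of `V`. -/
noncomputable def innerPieces (φ : A →ₗ[ℂ] ℂ) {n : ℕ} (a : Fin n → A) (V : Finset (Fin n)) : ℂ :=
  (((V.sort (· ≤ ·)).zip (V.sort (· ≤ ·)).tail).map fun p =>
    booleanCumulant φ (ordList a fun i => p.1 ≤ i ∧ i < p.2)).prod

/-- The word read before the first element of `V`. -/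
noncomputable def headWord {B : Type*} {n : ℕ} (a : Fin n → B) (V : Finset (Fin n)) :
    List B :=
  ordList a fun i => ∀ v ∈ V, i < v

/-- The word read from the last element of `V` on. -/
noncomputable def tailWord {B : Type*} {n : ℕ} (a : Fin n → B) (V : Finset (Fin n)) :
    List B :=
  ordList a fun i => ∀ v ∈ V, v ≤ i

section Shift

variable {B : Type*} (φ : A →ₗ[ℂ] ℂ) {n : ℕ} (a : Fin (n + 1) → A) (b : Fin (n + 1) → B)
  (V : Finset (Fin n))

theorem sort_map_succEmb :
    (V.map (Fin.succEmb n)).sort (· ≤ ·) = (V.sort (· ≤ ·)).map Fin.succ := by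
  rw [← Finset.map_sort (r := (· ≤ ·))]
  · rfl
  · simp

theorem sort_insert_zero_map_succEmb :
    (insert 0 (V.map (Fin.succEmb n))).sort (· ≤ ·) = 0 :: (V.sort (· ≤ ·)).map Fin.succ := by
  rw [Finset.sort_insert, sort_map_succEmb]
  · simp
  · simp

theorem headWord_map_succEmb :
    headWord b (V.map (Fin.succEmb n)) = b 0 :: headWord (Fin.tail b) V := by
  simp [headWord, ordList_succ]

theorem headWord_insert_zero :
    headWord b (insert 0 (V.map (Fin.succEmb n))) = [] := by
  simp [headWord, ordList]

theorem tailWord_map_succEmb (hV : V.Nonempty) :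
    tailWord b (V.map (Fin.succEmb n)) = tailWord (Fin.tail b) V := by
  simpa [tailWord, ordList_succ, Finset.Nonempty] using hV

theorem tailWord_insert_zero (hV : V.Nonempty) :
    tailWord b (insert 0 (V.map (Fin.succEmb n))) = tailWord (Fin.tail b) V := by
  simpa [tailWord, ordList_succ, Finset.Nonempty] using hV

theorem innerPieces_map_succEmb :
    innerPieces φ a (V.map (Fin.succEmb n)) = innerPieces φ (Fin.tail a) V := by
  unfold innerPieces
  rw [sort_map_succEmb, ← List.map_tail, List.zip_map, List.map_map]
  simp [Function.comp_def, ordList_succ]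

theorem innerPieces_insert_zero (hV : V.Nonempty) :
    innerPieces φ a (insert 0 (V.map (Fin.succEmb n))) =
      booleanCumulant φ (a 0 :: headWord (Fin.tail a) V) * innerPieces φ (Fin.tail a) V := by
  rw [← innerPieces_map_succEmb φ a]
  unfold innerPieces
  rw [sort_map_succEmb, sort_insert_zero_map_succEmb]
  have hp : (V.sort (· ≤ ·)).Pairwise (· ≤ ·) := Finset.pairwise_sort V _
  have hm : ∀ v, v ∈ V ↔ v ∈ V.sort (· ≤ ·) := fun v => (Finset.mem_sort _).symm
  obtain ⟨m, s, hs⟩ := List.exists_cons_of_ne_nil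
    (show V.sort (· ≤ ·) ≠ [] by obtain ⟨v, hv⟩ := hV; exact List.ne_nil_of_mem ((hm v).1 hv))
  rw [hs] at hp hm ⊢
  simp only [List.map_cons, List.tail_cons, List.zip_cons_cons, List.prod_cons]
  congr 2
  rw [ordList_succ]
  simp only [Fin.zero_le, Fin.succ_pos, and_self, if_true, List.cons_append, List.nil_append,
    headWord, true_and, Fin.succ_lt_succ_iff]
  congr 1
  refine ordList_congr _ fun i => ⟨fun h v hv => ?_, fun h => h m ((hm m).2 (by simp))⟩
  rcases List.mem_cons.1 ((hm v).1 hv) with rfl | hv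
  · exact h
  · exact h.trans_le ((List.pairwise_cons.1 hp).1 v hv)

end Shift

/-- The sum over nonempty `V` of the Boolean cumulants of the pieces cut out by `V`, the first
piece being prefixed with `d` and the last one followed by `c`. -/
noncomputable def linearPieceSum (φ : A →ₗ[ℂ] ℂ) (d c : List A) {n : ℕ} (a : Fin n → A) : ℂ :=
  ∑ V : Finset (Fin n), if V.Nonempty then
    booleanCumulant φ (d ++ headWord a V) * innerPieces φ a V *
      booleanCumulant φ (tailWord a V ++ c) else 0

/-- The sum over nonempty `V` of the Boolean cumulants of the cyclic pieces cut out by `V`, with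
`c` inserted in the wrapping piece. -/
noncomputable def cyclicPieceSum (φ : A →ₗ[ℂ] ℂ) (c : List A) {n : ℕ} (a : Fin n → A) : ℂ :=
  ∑ V : Finset (Fin n), if V.Nonempty then
    innerPieces φ a V * booleanCumulant φ (tailWord a V ++ c ++ headWord a V) else 0

theorem innerPieces_singleton_zero (φ : A →ₗ[ℂ] ℂ) {n : ℕ} (a : Fin (n + 1) → A) :
    innerPieces φ a {0} = 1 := by
  simp [innerPieces]

theorem linearPieceSum_succ (φ : A →ₗ[ℂ] ℂ) (d c : List A) {n : ℕ} (a : Fin (n + 1) → A) :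
    linearPieceSum φ d c a = linearPieceSum φ (d ++ [a 0]) c (Fin.tail a) +
      booleanCumulant φ d * (booleanCumulant φ (List.ofFn a ++ c) +
        linearPieceSum φ [a 0] c (Fin.tail a)) := by
  rw [linearPieceSum, sum_finset_fin_succ]
  congr 1
  · refine Finset.sum_congr rfl fun V _ => ?_
    by_cases hV : V.Nonempty
    · simp [hV, headWord_map_succEmb, tailWord_map_succEmb, innerPieces_map_succEmb]
    · simp [hV]
  · rw [linearPieceSum, mul_add, Finset.mul_sum,
      ← Finset.add_sum_erase _ _ (Finset.mem_univ ∅),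
      ← Finset.add_sum_erase Finset.univ (fun V : Finset (Fin n) => booleanCumulant φ d * _)
        (Finset.mem_univ ∅)]
    have h0 : tailWord a {0} = List.ofFn a := ordList_of_forall a (by simp)
    have h1 : headWord a {0} = [] := by simpa using headWord_insert_zero a (∅ : Finset (Fin n))
    simp only [Finset.map_empty, insert_empty_eq, Finset.singleton_nonempty, if_true, h0, h1,
      innerPieces_singleton_zero, Finset.not_nonempty_empty, if_false, mul_zero, zero_add,
      List.append_nil, mul_one]
    congr 1
    refine Finset.sum_congr rfl fun V hV => ?_
    have hV : V.Nonempty := Finset.nonempty_iff_ne_empty.2 (Finset.ne_of_mem_erase hV)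
    simp [hV, headWord_insert_zero, tailWord_insert_zero, innerPieces_insert_zero, mul_assoc]

theorem cyclicPieceSum_succ (φ : A →ₗ[ℂ] ℂ) (c : List A) {n : ℕ} (a : Fin (n + 1) → A) :
    cyclicPieceSum φ c a = cyclicPieceSum φ (c ++ [a 0]) (Fin.tail a) +
      (booleanCumulant φ (List.ofFn a ++ c) + linearPieceSum φ [a 0] c (Fin.tail a)) := by
  rw [cyclicPieceSum, sum_finset_fin_succ]
  congr 1
  · refine Finset.sum_congr rfl fun V _ => ?_
    by_cases hV : V.Nonempty
    · simp [hV, headWord_map_succEmb, tailWord_map_succEmb, innerPieces_map_succEmb]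
    · simp [hV]
  · rw [linearPieceSum, ← Finset.add_sum_erase _ _ (Finset.mem_univ ∅),
      ← Finset.add_sum_erase (Finset.univ : Finset (Finset (Fin n))) _ (Finset.mem_univ ∅)]
    have h0 : tailWord a {0} = List.ofFn a := ordList_of_forall a (by simp)
    have h1 : headWord a {0} = [] := by simpa using headWord_insert_zero a (∅ : Finset (Fin n))
    simp only [Finset.map_empty, insert_empty_eq, Finset.singleton_nonempty, if_true, h0, h1,
      innerPieces_singleton_zero, Finset.not_nonempty_empty, if_false, zero_add,
      List.append_nil, one_mul]
    congr 1
    refine Finset.sum_congr rfl fun V hV => ?_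
    have hV : V.Nonempty := Finset.nonempty_iff_ne_empty.2 (Finset.ne_of_mem_erase hV)
    simp [hV, headWord_insert_zero, tailWord_insert_zero, innerPieces_insert_zero]

theorem linearPieceSum_eq_splitSum (φ : A →ₗ[ℂ] ℂ) (d c : List A) {n : ℕ} (a : Fin n → A) :
    linearPieceSum φ d c a = splitSum
      (fun h s => booleanCumulant φ (d ++ h) * tailCumulantSum φ c s) (List.ofFn a) := by
  induction n generalizing d with
  | zero => simp [linearPieceSum, splitSum, Finset.eq_empty_of_isEmpty]
  | succ n ih =>
    have ht : List.ofFn a = a 0 :: List.ofFn (Fin.tail a) := List.ofFn_succ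
    rw [linearPieceSum_succ, ih, ih, ht, splitSum, tailCumulantSum_cons, add_comm]
    simp

theorem cyclicPieceSum_eq_splitSum (φ : A →ₗ[ℂ] ℂ) (c : List A) {n : ℕ} (a : Fin n → A) :
    cyclicPieceSum φ c a =
      splitSum (fun h s => tailCumulantSum φ (c ++ h) s) (List.ofFn a) := by
  induction n generalizing c with
  | zero => simp [cyclicPieceSum, splitSum, Finset.eq_empty_of_isEmpty]
  | succ n ih =>
    have ht : List.ofFn a = a 0 :: List.ofFn (Fin.tail a) := List.ofFn_succ
    rw [cyclicPieceSum_succ, ih, linearPieceSum_eq_splitSum, ht, splitSum,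
      tailCumulantSum_cons, add_comm]
    simp

theorem mkValue_eq_cyclicValue (φ : A →ₗ[ℂ] ℂ) (l : List A) :
    mkValue φ l.get = cyclicValue φ l := by
  have h := cyclicPieceSum_eq_splitSum φ [] l.get
  rw [List.ofFn_get] at h
  simp only [List.nil_append] at h
  rw [cyclicValue, ← h, cyclicPieceSum]
  simp only [List.append_nil]
  rfl

/-! ### Words in two monotone independent subalgebras -/

/-- Every letter of `l` lies in `S₁` or in `S₂`. -/
def IsMixedWord {B : Type*} (S₁ S₂ : Set B) (l : List B) : Prop := ∀ a ∈ l, a ∈ S₁ ∨ a ∈ S₂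

/-- `l` is empty or its first letter lies in `S`. -/
def StartsIn {B : Type*} (S : Set B) (l : List B) : Prop := ∀ a ∈ l.head?, a ∈ S

/-- `l` is empty or its last letter lies in `S`. -/
def EndsIn {B : Type*} (S : Set B) (l : List B) : Prop := ∀ a ∈ l.getLast?, a ∈ S

section Words

variable {B : Type*} {S S₁ S₂ : Set B} {u v l : List B}

theorem isMixedWord_append :
    IsMixedWord S₁ S₂ (u ++ v) ↔ IsMixedWord S₁ S₂ u ∧ IsMixedWord S₁ S₂ v := by
  simp only [IsMixedWord, List.mem_append]
  grind

theorem StartsIn.of_append (h : StartsIn S (u ++ v)) : StartsIn S u := by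
  cases u <;> simp_all [StartsIn]

theorem StartsIn.append (h : StartsIn S u) (hu : u ≠ []) : StartsIn S (u ++ v) := by
  cases u <;> simp_all [StartsIn]

theorem EndsIn.of_append (h : EndsIn S (u ++ v)) : EndsIn S v := by
  intro a ha
  refine h a ?_
  rw [List.getLast?_append, Option.mem_def.1 ha]
  rfl

theorem EndsIn.append (h : EndsIn S v) (hv : v ≠ []) : EndsIn S (u ++ v) := by
  intro a ha
  rw [List.getLast?_append, List.getLast?_eq_some_getLast hv] at ha
  exact h a (by rw [List.getLast?_eq_some_getLast hv]; exact ha)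

end Words

/-- Letters of `S₂` standing between letters of `S₁` can be pulled out of the moments of words. -/
def HasPeakFactorization (φ : A →ₗ[ℂ] ℂ) (S₁ S₂ : Set A) : Prop :=
  ∀ x b y : List A, IsMixedWord S₁ S₂ x → IsMixedWord S₁ S₂ y → (∀ c ∈ b, c ∈ S₂) →
    EndsIn S₁ x → StartsIn S₁ y →
      wordMoment φ (x ++ b ++ y) = wordMoment φ b * wordMoment φ (x ++ y)

/-- Boolean cumulants vanish on concatenations whose moments factorize. -/
theorem booleanCumulant_append_eq_zero (φ : A →ₗ[ℂ] ℂ) {x y : List A} (hx : x ≠ [])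
    (hy : y ≠ [])
    (h : ∀ x₁ x₂ y₁ y₂, x₁ ++ x₂ = x → y₁ ++ y₂ = y →
      wordMoment φ (x₂ ++ y₁) = wordMoment φ x₂ * wordMoment φ y₁) :
    booleanCumulant φ (x ++ y) = 0 := by
  induction hn : y.length using Nat.strong_induction_on generalizing y with
  | _ n ih =>
    have h1 := h [] x y [] rfl (by simp)
    rw [wordMoment_eq_splitSumNe φ (l := x ++ y) (by simp [hx]), splitSumNe_append,
      splitSumNe_congr (g := fun u v => wordMoment φ y *
        (booleanCumulant φ u * wordMoment φ v)) (l := x), splitSumNe_mul_left,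
      ← wordMoment_eq_splitSumNe φ hx, mul_comm, add_eq_left, splitSumNe_eq_last hy] at h1
    · simpa using h1
    · intro u v huv hu hv
      rw [ih u.length _ hu (fun x₁ x₂ y₁ y₂ hx' hy' =>
        h x₁ x₂ y₁ (y₂ ++ v) hx' (by rw [← List.append_assoc, hy', huv])) rfl, zero_mul]
      rw [← hn, ← huv, List.length_append]
      have := List.length_pos_iff.2 hv
      omega
    · intro u v huv _
      rw [h u v y [] huv (by simp)]
      ring

section Peak

variable {φ : A →ₗ[ℂ] ℂ} {S₁ S₂ : Set A}

theorem HasPeakFactorization.booleanCumulant_append_eq_zero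
    (hF : HasPeakFactorization φ S₁ S₂) {x b : List A} (hx : x ≠ []) (hb : b ≠ [])
    (hxm : IsMixedWord S₁ S₂ x) (hxe : EndsIn S₁ x) (hbm : ∀ c ∈ b, c ∈ S₂) :
    booleanCumulant φ (x ++ b) = 0 := by
  refine NCProb.booleanCumulant_append_eq_zero φ hx hb fun x₁ x₂ b₁ b₂ hx' hb' => ?_
  subst hx' hb'
  have := hF x₂ b₁ [] (isMixedWord_append.1 hxm).2 (by simp [IsMixedWord])
    (fun c hc => hbm c (by simp [hc])) hxe.of_append (by simp [StartsIn])
  simpa [mul_comm] using this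

theorem HasPeakFactorization.booleanCumulant_peak
    (hF : HasPeakFactorization φ S₁ S₂) {x b y : List A} (hx : x ≠ []) (hy : y ≠ [])
    (hxm : IsMixedWord S₁ S₂ x) (hxe : EndsIn S₁ x) (hbm : ∀ c ∈ b, c ∈ S₂)
    (hym : IsMixedWord S₁ S₂ y) (hys : StartsIn S₁ y) :
    booleanCumulant φ (x ++ b ++ y) = wordMoment φ b * booleanCumulant φ (x ++ y) := by
  induction hn : y.length using Nat.strong_induction_on generalizing y with
  | _ n ih =>
    have hprefix : splitSumNe (fun u v => booleanCumulant φ u * wordMoment φ (v ++ (b ++ y))) x =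
        wordMoment φ b *
          splitSumNe (fun u v => booleanCumulant φ u * wordMoment φ (v ++ y)) x := by
      rw [← splitSumNe_mul_left]
      refine splitSumNe_congr fun u v huv _ => ?_
      subst huv
      rw [← List.append_assoc, hF v b y (isMixedWord_append.1 hxm).2 hym hbm hxe.of_append hys]
      ring
    have hpeak : splitSumNe
        (fun u v => booleanCumulant φ (x ++ u) * wordMoment φ (v ++ y)) b = 0 := by
      rw [splitSumNe_congr (g := fun _ _ => 0), splitSumNe_zero]
      intro u v huv hu
      rw [hF.booleanCumulant_append_eq_zero hx hu hxm hxe, zero_mul]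
      intro c hc
      exact hbm c (by simp [← huv, hc])
    have h1 := hF x b y hxm hym hbm hxe hys
    rw [wordMoment_eq_splitSumNe φ (l := x ++ b ++ y) (by simp [hx]),
      wordMoment_eq_splitSumNe φ (l := x ++ y) (by simp [hx]), List.append_assoc,
      splitSumNe_append _ x (b ++ y), splitSumNe_append _ b y, hprefix, hpeak, zero_add,
      splitSumNe_append _ x y, mul_add, add_right_inj, ← sub_eq_zero, ← splitSumNe_mul_left,
      ← splitSumNe_sub, splitSumNe_eq_last hy] at h1
    · rw [List.append_assoc]
      simpa [sub_eq_zero] using h1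
    · intro u v huv hu hv
      have hlen : u.length < n := by
        rw [← hn, ← huv, List.length_append]
        have := List.length_pos_iff.2 hv
        omega
      subst huv
      rw [← List.append_assoc,
        ih u.length hlen hu (isMixedWord_append.1 hym).1 hys.of_append rfl]
      ring

theorem HasPeakFactorization.cyclicValue_append
    (hF : HasPeakFactorization φ S₁ S₂) {b x : List A} (hx : x ≠ [])
    (hxm : IsMixedWord S₁ S₂ x) (hxs : StartsIn S₁ x) (hxe : EndsIn S₁ x)
    (hbm : ∀ c ∈ b, c ∈ S₂) :
    cyclicValue φ (b ++ x) = wordMoment φ b * cyclicValue φ x := by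
  have hbm' : IsMixedWord S₁ S₂ b := fun c hc => Or.inr (hbm c hc)
  have hmoment : wordMoment φ (b ++ x) = wordMoment φ b * wordMoment φ x :=
    hF [] b x (by simp [IsMixedWord]) hxm hbm (by simp [EndsIn]) hxs
  have hpeak : splitSumNe (fun u v => tailCumulantSum φ u (v ++ x)) b = 0 := by
    rw [splitSumNe_congr (g := fun _ _ => 0), splitSumNe_zero]
    intro u v huv hu
    rw [tailCumulantSum, splitSum_congr (g := fun _ _ => 0), splitSum_zero]
    intro w t hwt
    split_ifs with ht
    · rfl
    have hvx : IsMixedWord S₁ S₂ (v ++ x) := by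
      subst huv
      exact isMixedWord_append.2 ⟨(isMixedWord_append.1 hbm').2, hxm⟩
    have hte : EndsIn S₁ t := by
      have h : EndsIn S₁ (v ++ x) := hxe.append hx
      rw [← hwt] at h
      exact h.of_append
    rw [← hwt] at hvx
    rw [hF.booleanCumulant_append_eq_zero ht hu (isMixedWord_append.1 hvx).2 hte, mul_zero]
    intro c hc
    exact hbm c (by simp [← huv, hc])
  have hsuffix : splitSumNe (fun u v => tailCumulantSum φ (b ++ u) v) x =
      wordMoment φ b * splitSumNe (fun u v => tailCumulantSum φ u v) x := by
    rw [← splitSumNe_mul_left]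
    refine splitSumNe_congr fun u v huv hu => ?_
    subst huv
    rw [tailCumulantSum, tailCumulantSum, ← splitSum_mul_left]
    refine splitSum_congr fun w t hwt => ?_
    split_ifs with ht
    · simp
    subst hwt
    rw [← List.append_assoc, hF.booleanCumulant_peak ht hu
      (isMixedWord_append.1 (isMixedWord_append.1 hxm).2).2 hxe.of_append.of_append hbm
      (isMixedWord_append.1 hxm).1 hxs.of_append]
    ring
  rw [cyclicValue, splitSum_append, splitSum_eq_add_splitSumNe, hpeak, hsuffix, cyclicValue,
    splitSum_eq_add_splitSumNe _ x, tailCumulantSum_nil_left φ hx,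
    tailCumulantSum_nil_left φ (by simp [hx]), hmoment]
  ring

end Peak

/-! ### Grouping the letters of a word into alternating blocks -/

theorem ordList_comp {B C : Type*} {n : ℕ} (f : B → C) (a : Fin n → B) (P : Fin n → Prop)
    [DecidablePred P] : ordList (fun i => f (a i)) P = (ordList a P).map f := by
  simp [ordList]

theorem ordList_get_ne_length {B : Type*} (x : List B) (c : B) (y : List B)
    (p : Fin (x ++ c :: y).length) (hp : (p : ℕ) = x.length) :
    ordList (x ++ c :: y).get (fun i => i ≠ p) = x ++ y := by
  induction x with
  | nil =>
    obtain rfl : p = ⟨0, by simp⟩ := Fin.ext hp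
    have h := ordList_succ (n := y.length) (c :: y).get (fun i => i ≠ 0)
    rw [ordList_of_forall _ (fun i => Fin.succ_ne_zero i)] at h
    refine h.trans ?_
    simp only [ne_eq, not_true, if_false, List.nil_append]
    exact List.ofFn_get y
  | cons d x ih =>
    have h := ordList_succ (n := (x ++ c :: y).length) (d :: (x ++ c :: y)).get (fun i => i ≠ p)
    refine h.trans ?_
    have hp0 : (0 : Fin ((x ++ c :: y).length + 1)) ≠ p := by
      intro h0
      have := congrArg Fin.val h0
      rw [hp] at this
      simp at this
    rw [if_pos hp0]
    rw [List.length_cons] at hp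
    have hlt : x.length < (x ++ c :: y).length := by simp
    refine congrArg (d :: ·) ?_
    refine Eq.trans ?_ (ih ⟨x.length, hlt⟩ rfl)
    refine ordList_congr _ fun i => ?_
    simp only [ne_eq, Fin.ext_iff, Fin.val_succ, hp, Nat.add_right_cancel_iff]

/-- `m` lists labelled blocks, with consecutive labels distinct, whose product is that of `l`. -/
def IsGrouping (S : Bool → Set A) (l : List A) (m : List (Bool × A)) : Prop :=
  m.IsChain (fun p q => p.1 ≠ q.1) ∧ (∀ p ∈ m, p.2 ∈ S p.1) ∧ (m.map Prod.snd).prod = l.prod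

theorem exists_isGrouping_cons (S : Bool → NonUnitalSubalgebra ℂ A) (l : List A)
    (hl : ∀ a ∈ l, ∃ j, a ∈ S j) (j : Bool) (a : A) (ha : a ∈ S j) :
    ∃ c m, IsGrouping (fun j => (S j : Set A)) (a :: l) ((j, c) :: m) := by
  induction l generalizing a j with
  | nil => exact ⟨a, [], by simpa [IsGrouping] using ha⟩
  | cons b l ih =>
    obtain ⟨k, hk⟩ := hl b (by simp)
    obtain ⟨c, m, hchain, hmem, hprod⟩ := ih (fun a h => hl a (by simp [h])) k b hk
    by_cases hjk : j = k
    · subst hjk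
      refine ⟨a * c, m, ?_, ?_, ?_⟩
      · rw [List.isChain_cons] at hchain ⊢
        exact hchain
      · rw [List.forall_mem_cons] at hmem ⊢
        exact ⟨mul_mem ha hmem.1, hmem.2⟩
      · simp only [List.map_cons, List.prod_cons] at hprod ⊢
        rw [mul_assoc, hprod]
    · refine ⟨a, (k, c) :: m, ?_, ?_, ?_⟩
      · exact List.isChain_cons_cons.2 ⟨hjk, hchain⟩
      · exact List.forall_mem_cons.2 ⟨ha, hmem⟩
      · rw [List.map_cons, List.prod_cons, hprod]
        simp

theorem exists_isGrouping_concat (S : Bool → NonUnitalSubalgebra ℂ A) (l : List A)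
    (hl : ∀ a ∈ l, ∃ j, a ∈ S j) (j : Bool) (a : A) (ha : a ∈ S j) :
    ∃ c m, IsGrouping (fun j => (S j : Set A)) (l ++ [a]) (m ++ [(j, c)]) := by
  induction l using List.reverseRecOn generalizing a j with
  | nil => exact ⟨a, [], by simpa [IsGrouping] using ha⟩
  | append_singleton l b ih =>
    obtain ⟨k, hk⟩ := hl b (by simp)
    obtain ⟨c, m, hchain, hmem, hprod⟩ := ih (fun a h => hl a (by simp [h])) k b hk
    by_cases hjk : j = k
    · subst hjk
      refine ⟨c * a, m, ?_, ?_, ?_⟩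
      · rw [List.isChain_append] at hchain ⊢
        simpa using hchain
      · rw [List.forall_mem_append] at hmem ⊢
        exact ⟨hmem.1, by simpa using mul_mem (by simpa using hmem.2) ha⟩
      · simp only [List.map_append, List.prod_append, List.map_cons, List.map_nil,
          List.prod_singleton] at hprod ⊢
        rw [← mul_assoc, hprod]
    · refine ⟨a, m ++ [(k, c)], ?_, ?_, ?_⟩
      · refine List.isChain_append.2 ⟨hchain, by simp, ?_⟩
        simpa using Ne.symm hjk
      · exact List.forall_mem_append.2 ⟨hmem, by simpa using ha⟩
      · rw [List.map_append, List.prod_append, hprod]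
        simp [mul_assoc]

theorem IsMonotoneIndep.apply_isChain {φ : A →ₗ[ℂ] ℂ} {S₁ S₂ : Set A}
    (hmono : IsMonotoneIndep φ S₁ S₂) (x y : List (Bool × A)) (c : A)
    (hchain : (x ++ (true, c) :: y).IsChain (fun p q => p.1 ≠ q.1))
    (hmem : ∀ p ∈ x ++ (true, c) :: y, p.2 ∈ if p.1 then S₂ else S₁) :
    φ ((x ++ (true, c) :: y).map Prod.snd).prod =
      φ c * φ ((x ++ y).map Prod.snd).prod := by
  set m := x ++ (true, c) :: y with hm
  have hlt : x.length < m.length := by simp [hm]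
  have hget : m.get ⟨x.length, hlt⟩ = (true, c) := by simp [hm]
  have h := hmono m.length (fun i => (m.get i).2) (fun i => (m.get i).1)
    ⟨fun i => hmem _ (List.get_mem m i), fun i hi => by
      simpa using List.isChain_iff_getElem.1 hchain i hi⟩ ⟨x.length, hlt⟩ (by rw [hget])
  rw [ordList_comp Prod.snd, ordList_get_ne_length _ _ _ _ rfl, hget] at h
  rw [← h]
  congr 2
  conv_lhs => rw [← List.ofFn_get m, List.map_ofFn]
  rfl

theorem IsMonotoneIndep.hasPeakFactorization {φ : A →ₗ[ℂ] ℂ}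
    {A₁ A₂ : NonUnitalSubalgebra ℂ A} (hmono : IsMonotoneIndep φ (A₁ : Set A) (A₂ : Set A)) :
    HasPeakFactorization φ (A₁ : Set A) (A₂ : Set A) := by
  intro x b y hx hy hb hxe hys
  by_cases hb0 : b = []
  · simp [hb0]
  by_cases hxy : x = [] ∧ y = []
  · simp [hxy.1, hxy.2]
  let S : Bool → NonUnitalSubalgebra ℂ A := fun j => if j then A₂ else A₁
  have hS : ∀ l, IsMixedWord (A₁ : Set A) (A₂ : Set A) l → ∀ a ∈ l, ∃ j, a ∈ S j :=
    fun l hl a ha => (hl a ha).elim (fun h => ⟨false, h⟩) (fun h => ⟨true, h⟩)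
  obtain ⟨X, hX, hXl⟩ : ∃ X, IsGrouping (fun j => (S j : Set A)) x X ∧
      ∀ p ∈ X.getLast?, p.1 = false := by
    rcases List.eq_nil_or_concat x with rfl | ⟨x', a, rfl⟩
    · exact ⟨[], by simp [IsGrouping], by simp⟩
    · rw [List.concat_eq_append] at hx hxe ⊢
      obtain ⟨c, m, hm⟩ := exists_isGrouping_concat S x' (hS x' (isMixedWord_append.1 hx).1) false
        a (hxe a (by simp))
      exact ⟨_, hm, by simp⟩
  obtain ⟨Y, hY, hYh⟩ : ∃ Y, IsGrouping (fun j => (S j : Set A)) y Y ∧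
      ∀ p ∈ Y.head?, p.1 = false := by
    rcases y with _ | ⟨a, y⟩
    · exact ⟨[], by simp [IsGrouping], by simp⟩
    · obtain ⟨c, m, hm⟩ := exists_isGrouping_cons S y
        (fun d hd => hS _ hy d (List.mem_cons_of_mem a hd)) false a (hys a (by simp))
      exact ⟨_, hm, by simp⟩
  have hbmem : b.prod ∈ A₂ := by
    clear hxy hX hY
    induction b with
    | nil => exact absurd rfl hb0
    | cons a b ih =>
      rw [List.prod_cons]
      by_cases hb' : b = []
      · simpa [hb'] using hb a (by simp)
      · exact mul_mem (hb a (by simp)) (ih (fun c hc => hb c (by simp [hc])) hb')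
  have hchain : (X ++ (true, b.prod) :: Y).IsChain (fun p q => p.1 ≠ q.1) := by
    refine List.isChain_append.2 ⟨hX.1, List.isChain_cons.2 ⟨fun p hp => ?_, hY.1⟩,
      fun p hp q hq => ?_⟩
    · simp [hYh p hp]
    · obtain rfl : (true, b.prod) = q := by simpa using hq
      simp [hXl p hp]
  have hset : ∀ p : Bool × A, p.2 ∈ S p.1 →
      p.2 ∈ if p.1 then (A₂ : Set A) else (A₁ : Set A) := by
    rintro ⟨_ | _, a⟩ h <;> exact h
  have h := hmono.apply_isChain X Y b.prod hchain (fun p hp => hset p (by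
    rcases List.mem_append.1 hp with hp | hp
    · exact hX.2.1 p hp
    · rcases List.mem_cons.1 hp with rfl | hp
      · exact hbmem
      · exact hY.2.1 p hp))
  rw [wordMoment_of_ne_nil φ (by simp [hb0]), wordMoment_of_ne_nil φ hb0,
    wordMoment_of_ne_nil φ (by simpa using hxy)]
  simpa [hX.2.2, hY.2.2, mul_assoc] using h

/-! ### Passage to the tensor algebra -/

/-- The pure tensor `a₁ ⊗ ⋯ ⊗ aₙ` of the letters of a word. -/
noncomputable def pureTensor (l : List A) : TensorAlgebra ℂ A :=
  (l.map fun x => TensorAlgebra.ι ℂ x).prod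

theorem pureTensor_append (u v : List A) :
    pureTensor (u ++ v) = pureTensor u * pureTensor v := by
  simp [pureTensor]

theorem mem_span_pureTensor (x : TensorAlgebra ℂ A) :
    x ∈ Submodule.span ℂ (Set.range (pureTensor (A := A))) := by
  have hx : x ∈ Subalgebra.toSubmodule
      (Algebra.adjoin ℂ (Set.range (TensorAlgebra.ι ℂ (M := A)))) := by
    rw [TensorAlgebra.adjoin_range_ι]
    trivial
  rw [Algebra.adjoin_eq_span] at hx
  refine Submodule.span_mono ?_ hx
  intro y hy
  induction hy using Submonoid.closure_induction with
  | mem y hy =>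
    obtain ⟨a, rfl⟩ := hy
    exact ⟨[a], by simp [pureTensor]⟩
  | one => exact ⟨[], by simp [pureTensor]⟩
  | mul y z _ _ hy hz =>
    obtain ⟨u, rfl⟩ := hy
    obtain ⟨v, rfl⟩ := hz
    exact ⟨u ++ v, pureTensor_append u v⟩

theorem adjoin_image_ι_subset_span (S : Set A) {x : TensorAlgebra ℂ A}
    (hx : x ∈ NonUnitalAlgebra.adjoin ℂ ((fun x => TensorAlgebra.ι ℂ x) '' S)) :
    x ∈ Submodule.span ℂ (pureTensor '' {l : List A | l ≠ [] ∧ ∀ a ∈ l, a ∈ S}) := by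
  have hx' : x ∈ (NonUnitalAlgebra.adjoin ℂ
      ((fun x => TensorAlgebra.ι ℂ x) '' S)).toSubmodule := hx
  rw [NonUnitalAlgebra.adjoin_eq_span] at hx'
  refine Submodule.span_mono ?_ hx'
  intro y hy
  induction hy using Subsemigroup.closure_induction with
  | mem y hy =>
    obtain ⟨a, ha, rfl⟩ := hy
    exact ⟨[a], by simpa using ha, by simp [pureTensor]⟩
  | mul y z _ _ hy hz =>
    obtain ⟨u, ⟨hu, huS⟩, rfl⟩ := hy
    obtain ⟨v, ⟨_, hvS⟩, rfl⟩ := hz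
    exact ⟨u ++ v, ⟨by simp [hu], List.forall_mem_append.2 ⟨huS, hvS⟩⟩, pureTensor_append u v⟩

/-- Induction principle for bilinear identities on spans of pure tensors. -/
theorem bilinear_eq_of_pureTensor {f g : TensorAlgebra ℂ A →ₗ[ℂ] TensorAlgebra ℂ A →ₗ[ℂ] ℂ}
    {U V : Set (List A)}
    (h : ∀ u ∈ U, ∀ v ∈ V, f (pureTensor u) (pureTensor v) = g (pureTensor u) (pureTensor v))
    {x y : TensorAlgebra ℂ A} (hx : x ∈ Submodule.span ℂ (pureTensor '' U))
    (hy : y ∈ Submodule.span ℂ (pureTensor '' V)) : f x y = g x y := by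
  have h1 : ∀ u ∈ U, f (pureTensor u) y = g (pureTensor u) y := fun u hu =>
    LinearMap.eqOn_span (by rintro _ ⟨v, hv, rfl⟩; exact h u hu v hv) hy
  exact LinearMap.eqOn_span (f := f.flip y) (g := g.flip y)
    (by rintro _ ⟨u, hu, rfl⟩; exact h1 u hu) hx

theorem isTracial_of_eq_mkValue {φ : A →ₗ[ℂ] ℂ} {ω : TensorAlgebra ℂ A →ₗ[ℂ] ℂ}
    (hω : ∀ l : List A, l ≠ [] → ω (pureTensor l) = mkValue φ l.get) : IsTracial ω := by
  intro x y
  refine bilinear_eq_of_pureTensor (U := Set.univ) (V := Set.univ)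
    (f := (LinearMap.mul ℂ (TensorAlgebra ℂ A)).compr₂ ω)
    (g := (LinearMap.mul ℂ (TensorAlgebra ℂ A)).flip.compr₂ ω) (fun u _ v _ => ?_)
    (by simpa using mem_span_pureTensor x) (by simpa using mem_span_pureTensor y)
  simp only [LinearMap.compr₂_apply, LinearMap.mul_apply', LinearMap.flip_apply]
  by_cases hu : u = []
  · simp [hu, pureTensor]
  · rw [← pureTensor_append, ← pureTensor_append, hω _ (by simp [hu]), hω _ (by simp [hu]),
      mkValue_eq_cyclicValue, mkValue_eq_cyclicValue, cyclicValue_append_comm]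

/-- The span of the pure tensors of nonempty words in `S₁ ∪ S₂` that start and end in `S₁`. -/
def valleySpan (S₁ S₂ : Set A) : Submodule ℂ (TensorAlgebra ℂ A) :=
  Submodule.span ℂ (pureTensor ''
    {l : List A | l ≠ [] ∧ IsMixedWord S₁ S₂ l ∧ StartsIn S₁ l ∧ EndsIn S₁ l})

section ValleySpan

variable {S₁ S₂ : Set A} {x y z : TensorAlgebra ℂ A}

theorem mem_valleySpan_of_mem_adjoin
    (hx : x ∈ NonUnitalAlgebra.adjoin ℂ ((fun x => TensorAlgebra.ι ℂ x) '' S₁)) :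
    x ∈ valleySpan S₁ S₂ := by
  refine Submodule.span_mono (Set.image_mono ?_) (adjoin_image_ι_subset_span S₁ hx)
  exact fun l ⟨hl, h⟩ => ⟨hl, fun a ha => Or.inl (h a ha),
    fun a ha => h a (List.mem_of_mem_head? ha), fun a ha => h a (List.mem_of_getLast? ha)⟩

theorem mul_mem_valleySpan (hx : x ∈ valleySpan S₁ S₂) (hy : y ∈ valleySpan S₁ S₂) :
    x * y ∈ valleySpan S₁ S₂ := by
  have h := Submodule.mul_mem_mul hx hy
  rw [valleySpan, Submodule.span_mul_span] at h
  refine Submodule.span_mono ?_ h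
  rintro _ ⟨_, ⟨u, ⟨hu, hum, hus, hue⟩, rfl⟩, _, ⟨v, ⟨hv, hvm, hvs, hve⟩, rfl⟩, rfl⟩
  exact ⟨u ++ v, ⟨by simp [hu], isMixedWord_append.2 ⟨hum, hvm⟩, hus.append hu, hve.append hv⟩,
    pureTensor_append u v⟩

theorem mul_mul_mem_valleySpan (hx : x ∈ valleySpan S₁ S₂)
    (hz : z ∈ NonUnitalAlgebra.adjoin ℂ ((fun x => TensorAlgebra.ι ℂ x) '' S₂))
    (hy : y ∈ valleySpan S₁ S₂) : x * z * y ∈ valleySpan S₁ S₂ := by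
  have h := Submodule.mul_mem_mul
    (Submodule.mul_mem_mul hx (adjoin_image_ι_subset_span S₂ hz)) hy
  rw [valleySpan, Submodule.span_mul_span, Submodule.span_mul_span] at h
  refine Submodule.span_mono ?_ h
  rintro _ ⟨_, ⟨_, ⟨u, ⟨hu, hum, hus, _⟩, rfl⟩, _, ⟨b, ⟨_, hb⟩, rfl⟩, rfl⟩, _,
    ⟨v, ⟨hv, hvm, _, hve⟩, rfl⟩, rfl⟩
  refine ⟨u ++ b ++ v, ⟨by simp [hu], isMixedWord_append.2 ⟨isMixedWord_append.2
    ⟨hum, fun c hc => Or.inr (hb c hc)⟩, hvm⟩, ?_, hve.append hv⟩, ?_⟩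
  · exact (hus.append hu).append (by simp [hu])
  · simp [pureTensor_append, mul_assoc]

theorem mul_prod_mem_valleySpan (hx : x ∈ valleySpan S₁ S₂) (l : List (TensorAlgebra ℂ A))
    (hl : ∀ t ∈ l, t ∈ valleySpan S₁ S₂) : x * l.prod ∈ valleySpan S₁ S₂ := by
  induction l generalizing x with
  | nil => simpa using hx
  | cons t l ih =>
    rw [List.prod_cons, ← mul_assoc]
    exact ih (mul_mem_valleySpan hx (hl t (by simp))) fun s hs => hl s (by simp [hs])

theorem mul_prod_ofFn_mem_valleySpan (hx : x ∈ valleySpan S₁ S₂) {n : ℕ}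
    (b a : Fin n → TensorAlgebra ℂ A)
    (hb : ∀ i, b i ∈ NonUnitalAlgebra.adjoin ℂ ((fun x => TensorAlgebra.ι ℂ x) '' S₂))
    (ha : ∀ i, a i ∈ valleySpan S₁ S₂) :
    x * (List.ofFn fun i => b i * a i).prod ∈ valleySpan S₁ S₂ := by
  induction n generalizing x with
  | zero => simpa using hx
  | succ n ih =>
    rw [List.ofFn_succ, List.prod_cons, ← mul_assoc, ← mul_assoc]
    exact ih (mul_mul_mem_valleySpan hx (hb 0) (ha 0)) _ _ (fun i => hb i.succ) fun i => ha i.succ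

end ValleySpan

section Extensions

variable {φ : A →ₗ[ℂ] ℂ} {S₁ S₂ : Set A} {φT ω : TensorAlgebra ℂ A →ₗ[ℂ] ℂ}

theorem apply_mul_of_mem_valleySpan (hF : HasPeakFactorization φ S₁ S₂) (hφT : ExtendsTo φ φT)
    (hω : ∀ l : List A, l ≠ [] → ω (pureTensor l) = mkValue φ l.get)
    {x z : TensorAlgebra ℂ A} (hx : x ∈ valleySpan S₁ S₂)
    (hz : z ∈ NonUnitalAlgebra.adjoin ℂ ((fun x => TensorAlgebra.ι ℂ x) '' S₂)) :
    ω (x * z) = φT z * ω x := by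
  refine bilinear_eq_of_pureTensor (f := (LinearMap.mul ℂ (TensorAlgebra ℂ A)).compr₂ ω)
    (g := ((LinearMap.mul ℂ ℂ).flip.compl₁₂ ω φT)) (fun u hu v hv => ?_) hx
    (adjoin_image_ι_subset_span S₂ hz)
  obtain ⟨hu, hum, hus, hue⟩ := hu
  obtain ⟨hv, hvm⟩ := hv
  simp only [LinearMap.compr₂_apply, LinearMap.mul_apply', LinearMap.flip_apply,
    LinearMap.compl₁₂_apply]
  rw [← pureTensor_append, hω _ (by simp [hu]), hω _ hu, mkValue_eq_cyclicValue,
    mkValue_eq_cyclicValue, cyclicValue_append_comm, hF.cyclicValue_append hu hum hus hue hvm,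
    wordMoment_of_ne_nil φ hv, ← hφT v hv]
  rfl

theorem apply_mul_prod_ofFn (hF : HasPeakFactorization φ S₁ S₂) (hφT : ExtendsTo φ φT)
    (hω : ∀ l : List A, l ≠ [] → ω (pureTensor l) = mkValue φ l.get)
    {x : TensorAlgebra ℂ A} (hx : x ∈ valleySpan S₁ S₂) {n : ℕ} (b a : Fin n → TensorAlgebra ℂ A)
    (hb : ∀ i, b i ∈ NonUnitalAlgebra.adjoin ℂ ((fun x => TensorAlgebra.ι ℂ x) '' S₂))
    (ha : ∀ i, a i ∈ valleySpan S₁ S₂) :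
    ω (x * (List.ofFn fun i => b i * a i).prod) = ω (x * (List.ofFn a).prod) * ∏ i, φT (b i) := by
  induction n generalizing x with
  | zero => simp
  | succ n ih =>
    have htr := isTracial_of_eq_mkValue hω
    have hmem : a 0 * (List.ofFn fun i : Fin n => a i.succ).prod ∈ valleySpan S₁ S₂ :=
      mul_prod_mem_valleySpan (ha 0) _ (by simpa using fun i => ha (Fin.succ i))
    rw [List.ofFn_succ, List.prod_cons, ← mul_assoc, ← mul_assoc,
      ih (mul_mul_mem_valleySpan hx (hb 0) (ha 0)) _ _ (fun i => hb i.succ) fun i => ha i.succ,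
      mul_assoc, htr, ← mul_assoc,
      apply_mul_of_mem_valleySpan hF hφT hω (mul_mem_valleySpan hmem hx) (hb 0), htr,
      Fin.prod_univ_succ, List.ofFn_succ (f := a), List.prod_cons]
    ring

theorem prod_ofFn_mul_eq {M : Type*} [Monoid M] {n : ℕ} (a b : Fin (n + 1) → M) :
    (List.ofFn fun i => a i * b i).prod =
      a 0 * (List.ofFn fun i : Fin n => b i.castSucc * a i.succ).prod * b (Fin.last n) := by
  induction n with
  | zero => simp
  | succ n ih =>
    rw [List.ofFn_succ, List.prod_cons, ih (fun i => a i.succ) (fun i => b i.succ),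
      List.ofFn_succ (n := n), List.prod_cons]
    simp [mul_assoc]

theorem apply_cyclic_word (hF : HasPeakFactorization φ S₁ S₂) (hφT : ExtendsTo φ φT)
    (hω : ∀ l : List A, l ≠ [] → ω (pureTensor l) = mkValue φ l.get) {n : ℕ}
    (a : Fin (n + 1) → TensorAlgebra ℂ A) (b : Fin (n + 2) → TensorAlgebra ℂ A)
    (ha : ∀ i, a i ∈ NonUnitalAlgebra.adjoin ℂ ((fun x => TensorAlgebra.ι ℂ x) '' S₁))
    (hb : ∀ i, b i ∈ NonUnitalAlgebra.adjoin ℂ ((fun x => TensorAlgebra.ι ℂ x) '' S₂)) :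
    ω (b 0 * (List.ofFn fun i => a i * b i.succ).prod) =
      ω (List.ofFn a).prod * (∏ i : Fin n, φT (b i.castSucc.succ)) *
        φT (b (Fin.last (n + 1)) * b 0) := by
  have ha' : ∀ i, a i ∈ valleySpan S₁ S₂ := fun i => mem_valleySpan_of_mem_adjoin (ha i)
  rw [prod_ofFn_mul_eq a fun i => b i.succ, isTracial_of_eq_mkValue hω, mul_assoc,
    apply_mul_of_mem_valleySpan hF hφT hω
      (mul_prod_ofFn_mem_valleySpan (ha' 0) _ _ (fun i => hb i.castSucc.succ) fun i => ha' i.succ)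
      (mul_mem (hb _) (hb _)),
    apply_mul_prod_ofFn hF hφT hω (ha' 0) _ _ (fun i => hb i.castSucc.succ) fun i => ha' i.succ,
    List.ofFn_succ (f := a), List.prod_cons, Fin.succ_last]
  ring

end Extensions

/-- The multiplication `T(A) → A`. -/
noncomputable def tensorMul : TensorAlgebra ℂ A →ₐ[ℂ] A :=
  TensorAlgebra.lift ℂ LinearMap.id

theorem tensorMul_pureTensor (l : List A) : tensorMul (pureTensor l) = l.prod := by
  simp [tensorMul, pureTensor, map_list_prod, Function.comp_def]

theorem tensorMul_mem_of_mem_adjoin (B : NonUnitalSubalgebra ℂ A) {x : TensorAlgebra ℂ A}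
    (hx : x ∈ NonUnitalAlgebra.adjoin ℂ ((fun x => TensorAlgebra.ι ℂ x) '' (B : Set A))) :
    tensorMul x ∈ B := by
  induction hx using NonUnitalAlgebra.adjoin_induction with
  | mem x hx =>
    obtain ⟨a, ha, rfl⟩ := hx
    simpa [tensorMul] using ha
  | zero => simp
  | add x y _ _ hx hy => rw [map_add]; exact add_mem hx hy
  | mul x y _ _ hx hy => rw [map_mul]; exact mul_mem hx hy
  | smul r x _ hx => rw [map_smul]; exact SMulMemClass.smul_mem r hx

/-- On products of elements of the augmentation ideal, the extension of `φ` is `φ ∘ tensorMul`. -/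
theorem ExtendsTo.apply_prod {φ : A →ₗ[ℂ] ℂ} {φT : TensorAlgebra ℂ A →ₗ[ℂ] ℂ}
    (hφT : ExtendsTo φ φT) {l : List (TensorAlgebra ℂ A)} (hl : l ≠ [])
    (hmem : ∀ t ∈ l, t ∈ Submodule.span ℂ (pureTensor '' {w : List A | w ≠ []})) :
    φT l.prod = φ (l.map tensorMul).prod := by
  have hprod : ∀ l : List (TensorAlgebra ℂ A), l ≠ [] →
      (∀ t ∈ l, t ∈ Submodule.span ℂ (pureTensor '' {w : List A | w ≠ []})) →
      l.prod ∈ Submodule.span ℂ (pureTensor '' {w : List A | w ≠ []}) := by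
    intro l hl hmem
    induction l with
    | nil => exact absurd rfl hl
    | cons t l ih =>
      rw [List.prod_cons]
      by_cases hl' : l = []
      · simpa [hl'] using hmem t (by simp)
      · have h := Submodule.mul_mem_mul (hmem t (by simp))
          (ih hl' fun s hs => hmem s (by simp [hs]))
        rw [Submodule.span_mul_span] at h
        refine Submodule.span_mono ?_ h
        rintro _ ⟨_, ⟨u, hu, rfl⟩, _, ⟨v, _, rfl⟩, rfl⟩
        exact ⟨u ++ v, by simpa using fun h => absurd h hu, pureTensor_append u v⟩
  rw [← map_list_prod]
  refine LinearMap.eqOn_span (f := φT) (g := φ ∘ₗ tensorMul.toLinearMap) ?_ (hprod l hl hmem)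
  rintro _ ⟨w, hw, rfl⟩
  simp only [LinearMap.comp_apply, AlgHom.toLinearMap_apply, tensorMul_pureTensor]
  exact hφT w hw

theorem ordList_ne_ne_nil {B : Type*} {n : ℕ} (a : Fin n → B) (p : Fin n) (hn : n ≠ 1) :
    ordList a (fun i => i ≠ p) ≠ [] := by
  have : Nontrivial (Fin n) := by
    have := p.pos
    exact Fin.nontrivial_iff_two_le.2 (by omega)
  obtain ⟨i, hi⟩ := exists_ne p
  exact List.ne_nil_of_mem (a := a i)
    (List.mem_map_of_mem (List.mem_filter.2 ⟨List.mem_finRange i, by simpa using hi⟩))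

theorem IsMonotoneIndep.adjoin_image_ι {φ : A →ₗ[ℂ] ℂ} {A₁ A₂ : NonUnitalSubalgebra ℂ A}
    (hmono : IsMonotoneIndep φ (A₁ : Set A) (A₂ : Set A)) {φT : TensorAlgebra ℂ A →ₗ[ℂ] ℂ}
    (hφT1 : φT 1 = 1) (hφT : ExtendsTo φ φT) :
    IsMonotoneIndep φT
      (↑(NonUnitalAlgebra.adjoin ℂ ((fun x => TensorAlgebra.ι ℂ x) '' (A₁ : Set A))) :
        Set (TensorAlgebra ℂ A))
      (↑(NonUnitalAlgebra.adjoin ℂ ((fun x => TensorAlgebra.ι ℂ x) '' (A₂ : Set A))) :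
        Set (TensorAlgebra ℂ A)) := by
  rintro n a j ⟨hmem, halt⟩ p hp
  by_cases hn : n = 1
  · subst hn
    obtain rfl := Subsingleton.elim p 0
    simp [ordList, hφT1, List.finRange_succ]
  have haug : ∀ i, a i ∈ Submodule.span ℂ (pureTensor '' {w : List A | w ≠ []}) := by
    intro i
    have h := hmem i
    split_ifs at h
    all_goals
      exact Submodule.span_mono (Set.image_mono fun l hl => hl.1)
        (adjoin_image_ι_subset_span _ h)
  have halt' : Alternates (A₁ : Set A) (A₂ : Set A) (fun i => tensorMul (a i)) j := by
    refine ⟨fun i => ?_, halt⟩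
    have h := hmem i
    split_ifs at h ⊢
    all_goals exact tensorMul_mem_of_mem_adjoin _ h
  have hsingle : φT (a p) = φ (tensorMul (a p)) := by
    simpa using hφT.apply_prod (l := [a p]) (by simp) (by simpa using haug p)
  have h := hmono n _ j halt' p hp
  rw [hφT.apply_prod (List.ne_nil_of_length_pos (by simpa using p.pos))
      (by simpa using haug), hsingle,
    hφT.apply_prod (ordList_ne_ne_nil a p hn)
      (fun t ht => by obtain ⟨i, _, rfl⟩ := List.mem_map.1 ht; exact haug i),
    ← ordList_comp, List.map_ofFn]
  exact h

/-- monotone independence of `A₁` from `A₂` with respect to `φ` implies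
cyclic monotone independence of `T₀(A₁)` and `T₀(A₂)` with respect to `(φ, [φ])`. -/
theorem monotoneIndep_implies_cycMonotoneIndep_tensorAlgebra
    {A : Type*} [Ring A] [Algebra ℂ A]
    (φ : A →ₗ[ℂ] ℂ)
    (A₁ A₂ : NonUnitalSubalgebra ℂ A)
    (hmono : IsMonotoneIndep φ (A₁ : Set A) (A₂ : Set A))
    -- the canonical extension of `φ` to `T(A)` (unital, as required)
    (φT : TensorAlgebra ℂ A →ₗ[ℂ] ℂ) (hφT1 : φT 1 = 1) (hφT : ExtendsTo φ φT)
    -- the functional `[φ]` on `T(A)`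
    (brφ : TensorAlgebra ℂ A →ₗ[ℂ] ℂ) (hbrφ1 : brφ 1 = 1)
    (hbrφ : ∀ l : List A, l ≠ [] →
      brφ (l.map fun x => TensorAlgebra.ι ℂ x).prod = mkValue φ l.get) :
    IsCycMonotoneIndep φT brφ
      (↑(NonUnitalAlgebra.adjoin ℂ ((fun x => TensorAlgebra.ι ℂ x) '' (A₁ : Set A))) :
        Set (TensorAlgebra ℂ A))
      (↑(NonUnitalAlgebra.adjoin ℂ ((fun x => TensorAlgebra.ι ℂ x) '' (A₂ : Set A))) :
        Set (TensorAlgebra ℂ A)) := by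
  refine ⟨hmono.adjoin_image_ι hφT1 hφT, fun n a b hn ha hb => ?_⟩
  obtain ⟨n, rfl⟩ : ∃ k, n = k + 1 := ⟨n - 1, by omega⟩
  rw [apply_cyclic_word hmono.hasPeakFactorization hφT hbrφ a b ha hb, Fin.prod_univ_succ,
    Fin.prod_univ_castSucc]
  simp

end NCProb
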